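/- arXiv:1103.1462 — 3 statements merged into one kernel-verified Lean document; each statement's English description precedes it below -/
import Mathlib

section
/- Let γ : [a, b] → ℂ (a < b) be a piecewise continuously differentiable curve and let f, g : ℂ → ℂ be continuous and nowhere-vanishing on an open set containing the image of γ. Then the complex multiplicative integral is multiplicative as a set equality: MInt(f·g, γ) = { w₁ · w₂ : w₁ ∈ MInt(f, γ), w₂ ∈ MInt(g, γ) }. -/
open Complex

/-- A curve `γ` is piecewise continuously differentiable on `[a, b]` if it is continuous
there and `[a, b]` splits into finitely many subintervals on each of which `γ` is `C¹`. -/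
def PiecewiseC1On (γ : ℝ → ℂ) (a b : ℝ) : Prop :=
  ContinuousOn γ (Set.Icc a b) ∧
  ∃ (m : ℕ) (t : ℕ → ℝ), 0 < m ∧ t 0 = a ∧ t m = b ∧
    (∀ k < m, t k < t (k + 1)) ∧
    ∀ k < m, ContDiffOn ℝ 1 γ (Set.Icc (t k) (t (k + 1)))

/-- `h` is a continuous logarithm of `f` along the curve `γ` on `[a, b]`. -/
def IsContinuousLog (f : ℂ → ℂ) (γ : ℝ → ℂ) (a b : ℝ) (h : ℝ → ℂ) : Prop :=
  ContinuousOn h (Set.Icc a b) ∧ ∀ t ∈ Set.Icc a b, Complex.exp (h t) = f (γ t)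

/-- The set of branch values of the complex multiplicative integral of `f` along `γ`. -/
def MInt (f : ℂ → ℂ) (γ : ℝ → ℂ) (a b : ℝ) : Set ℂ :=
  {w | ∃ h : ℝ → ℂ, IsContinuousLog f γ a b h ∧
    w = Complex.exp (∫ t in a..b, h t * deriv γ t)}

/-! Adding logarithms of `f` and `g` gives a logarithm of `f * g`, so products of branch values are
branch values of the product. Conversely, `f` has a continuous logarithm along the curve because
`exp` is a covering of `ℂ \ {0}` and an interval is simply connected; subtracting it from any
logarithm of `f * g` leaves a logarithm of `g`, which splits the given branch value. -/

theorem exists_continuous_exp_eq {X : Type*} [TopologicalSpace X] [SimplyConnectedSpace X]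
    [LocallyPathConnectedSpace X] {F : X → ℂ} (hF : Continuous F) (hF₀ : ∀ x, F x ≠ 0) :
    ∃ h : X → ℂ, Continuous h ∧ ∀ x, exp (h x) = F x := by
  obtain ⟨x₀⟩ : Nonempty X := inferInstance
  obtain ⟨h, ⟨-, hh⟩, -⟩ := isCoveringMapOn_exp.existsUnique_continuousMap_lifts ⟨F, hF⟩
    (a₀ := x₀) (exp_log (hF₀ x₀)) hF₀
  exact ⟨h, h.continuous, congrFun hh⟩

theorem exists_continuousOn_exp_eq_of_convex {E : Type*} [AddCommGroup E] [Module ℝ E]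
    [TopologicalSpace E] [IsTopologicalAddGroup E] [ContinuousSMul ℝ E] [LocallyConvexSpace ℝ E]
    {s : Set E} (hs : Convex ℝ s) {F : E → ℂ} (hF : ContinuousOn F s) (hF₀ : ∀ x ∈ s, F x ≠ 0) :
    ∃ h : E → ℂ, ContinuousOn h s ∧ ∀ x ∈ s, exp (h x) = F x := by
  obtain rfl | hne := s.eq_empty_or_nonempty
  · exact ⟨0, continuousOn_empty _, by simp⟩
  have : ContractibleSpace s := hs.contractibleSpace hne
  have : LocallyPathConnectedSpace s := hs.locallyPathConnectedSpace
  obtain ⟨h, hh, hexp⟩ :=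
    exists_continuous_exp_eq (continuousOn_iff_continuous_domRestrict.mp hF) fun x => hF₀ x x.2
  have hext (x : s) : Function.extend Subtype.val h 0 x = h x :=
    Subtype.val_injective.extend_apply h 0 x
  refine ⟨Function.extend Subtype.val h 0, ?_, fun x hx => ?_⟩
  · exact continuousOn_iff_continuous_domRestrict.mpr (hh.congr fun x => (hext x).symm)
  · rw [hext ⟨x, hx⟩]
    exact hexp ⟨x, hx⟩

theorem intervalIntegrable_deriv_of_contDiffOn_Icc {E : Type*} [NormedAddCommGroup E]
    [NormedSpace ℝ E] {γ : ℝ → E} {a b : ℝ} (hab : a ≤ b)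
    (hγ : ContDiffOn ℝ 1 γ (Set.Icc a b)) :
    IntervalIntegrable (deriv γ) MeasureTheory.volume a b := by
  obtain rfl | hlt := hab.eq_or_lt
  · exact IntervalIntegrable.refl
  have hcont : ContinuousOn (derivWithin γ (Set.Icc a b)) (Set.Icc a b) :=
    hγ.continuousOn_derivWithin (uniqueDiffOn_Icc hlt) le_rfl
  refine (hcont.intervalIntegrable_of_Icc hab).congr_uIoo fun t ht => ?_
  rw [Set.uIoo_of_le hab] at ht
  exact derivWithin_of_mem_nhds (Icc_mem_nhds ht.1 ht.2)

theorem PiecewiseC1On.intervalIntegrable_deriv {γ : ℝ → ℂ} {a b : ℝ}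
    (hγ : PiecewiseC1On γ a b) : IntervalIntegrable (deriv γ) MeasureTheory.volume a b := by
  obtain ⟨-, m, t, -, rfl, rfl, hlt, hC1⟩ := hγ
  exact IntervalIntegrable.trans_iterate fun k hk =>
    intervalIntegrable_deriv_of_contDiffOn_Icc (hlt k hk).le (hC1 k hk)

section BranchValues

variable {f g : ℂ → ℂ} {γ h k : ℝ → ℂ} {a b : ℝ}

theorem exists_isContinuousLog (hf : ContinuousOn (fun t => f (γ t)) (Set.Icc a b))
    (hf₀ : ∀ t ∈ Set.Icc a b, f (γ t) ≠ 0) : ∃ h, IsContinuousLog f γ a b h :=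
  exists_continuousOn_exp_eq_of_convex (convex_Icc a b) hf hf₀

namespace IsContinuousLog

theorem mul (hh : IsContinuousLog f γ a b h) (hk : IsContinuousLog g γ a b k) :
    IsContinuousLog (fun z => f z * g z) γ a b (h + k) :=
  ⟨hh.1.add hk.1, fun t ht => by rw [Pi.add_apply, exp_add, hh.2 t ht, hk.2 t ht]⟩

theorem sub_of_mul (hh : IsContinuousLog (fun z => f z * g z) γ a b h)
    (hk : IsContinuousLog f γ a b k) : IsContinuousLog g γ a b (h - k) := by
  refine ⟨hh.1.sub hk.1, fun t ht => ?_⟩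
  rw [Pi.sub_apply, exp_sub, div_eq_iff (exp_ne_zero _), hh.2 t ht, hk.2 t ht, mul_comm]

theorem intervalIntegrable_mul_deriv (hh : IsContinuousLog f γ a b h) (hab : a ≤ b)
    (hγ : IntervalIntegrable (deriv γ) MeasureTheory.volume a b) :
    IntervalIntegrable (fun t => h t * deriv γ t) MeasureTheory.volume a b :=
  hγ.continuousOn_mul (by simpa only [Set.uIcc_of_le hab] using hh.1)

theorem exp_integral_add_mul_deriv (hh : IsContinuousLog f γ a b h) (hk : IsContinuousLog g γ a b k)
    (hab : a ≤ b) (hγ : IntervalIntegrable (deriv γ) MeasureTheory.volume a b) :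
    exp (∫ t in a..b, (h + k) t * deriv γ t) =
      exp (∫ t in a..b, h t * deriv γ t) * exp (∫ t in a..b, k t * deriv γ t) := by
  simp only [Pi.add_apply, add_mul]
  rw [intervalIntegral.integral_add (hh.intervalIntegrable_mul_deriv hab hγ)
    (hk.intervalIntegrable_mul_deriv hab hγ), exp_add]

end IsContinuousLog

theorem multiplicative_integral_mul_general (hab : a ≤ b)
    (hγ : IntervalIntegrable (deriv γ) MeasureTheory.volume a b)
    (hf : ContinuousOn (fun t => f (γ t)) (Set.Icc a b))
    (hf₀ : ∀ t ∈ Set.Icc a b, f (γ t) ≠ 0) :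
    MInt (fun z => f z * g z) γ a b =
      {w | ∃ w₁ ∈ MInt f γ a b, ∃ w₂ ∈ MInt g γ a b, w = w₁ * w₂} := by
  ext w
  constructor
  · rintro ⟨h, hh, rfl⟩
    obtain ⟨k, hk⟩ := exists_isContinuousLog hf hf₀
    have hsub : IsContinuousLog g γ a b (h - k) := hh.sub_of_mul hk
    refine ⟨_, ⟨k, hk, rfl⟩, _, ⟨h - k, hsub, rfl⟩, ?_⟩
    rw [← hk.exp_integral_add_mul_deriv hsub hab hγ, add_sub_cancel]
  · rintro ⟨_, ⟨h, hh, rfl⟩, _, ⟨k, hk, rfl⟩, rfl⟩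
    exact ⟨h + k, hh.mul hk, (hh.exp_integral_add_mul_deriv hk hab hγ).symm⟩

end BranchValues

/-- Theorem 6 (2nd multiplicative property): the complex multiplicative integral of a
product is the set product of the complex multiplicative integrals:
`MInt (f·g, γ) = { w₁·w₂ : w₁ ∈ MInt (f, γ), w₂ ∈ MInt (g, γ) }`. -/
theorem multiplicative_integral_mul
    (a b : ℝ) (hab : a < b)
    (γ : ℝ → ℂ) (hγ : PiecewiseC1On γ a b)
    (U : Set ℂ) (hU : IsOpen U) (hγU : ∀ t ∈ Set.Icc a b, γ t ∈ U)
    (f g : ℂ → ℂ) (hf : ContinuousOn f U) (hg : ContinuousOn g U)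
    (hfne : ∀ z ∈ U, f z ≠ 0) (hgne : ∀ z ∈ U, g z ≠ 0) :
    MInt (fun z => f z * g z) γ a b =
      {w | ∃ w₁ ∈ MInt f γ a b, ∃ w₂ ∈ MInt g γ a b, w = w₁ * w₂} := by
  exact multiplicative_integral_mul_general hab.le hγ.intervalIntegrable_deriv
    (hf.comp hγ.1 hγU) fun t ht => hfne _ (hγU t ht)
end

section
/- Let γ : [a, b] → ℂ (a < b) be a piecewise continuously differentiable curve, let f : ℂ → ℂ be continuous and nowhere-vanishing on an open set containing the image of γ, and let n ∈ ℤ. Then { wⁿ : w ∈ MInt(f, γ) } ⊆ MInt(fⁿ, γ), where fⁿ denotes the pointwise n-th (integer) power of f. -/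
open Complex

section

variable {f : ℂ → ℂ} {γ h : ℝ → ℂ} {a b : ℝ}

theorem IsContinuousLog.zpow (hh : IsContinuousLog f γ a b h) (n : ℤ) :
    IsContinuousLog (fun z => f z ^ n) γ a b (fun t => n * h t) := by
  obtain ⟨h_cont, h_exp⟩ := hh
  refine ⟨continuousOn_const.mul h_cont, fun t ht => ?_⟩
  rw [exp_int_mul, h_exp t ht]

theorem multiplicative_integral_zpow_general {w : ℂ} (hw : w ∈ MInt f γ a b) (n : ℤ) :
    w ^ n ∈ MInt (fun z => f z ^ n) γ a b := by
  obtain ⟨h, hh, rfl⟩ := hw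
  refine ⟨fun t => n * h t, hh.zpow n, ?_⟩
  calc exp (∫ t in a..b, h t * deriv γ t) ^ n
      = exp (n * ∫ t in a..b, h t * deriv γ t) := (exp_int_mul _ n).symm
    _ = exp (∫ t in a..b, n * h t * deriv γ t) := by
      simp only [mul_assoc, intervalIntegral.integral_const_mul]

end

/-- Theorem 9 (raising to an integer power): `(∫_C f^{dz})^n ⊆ ∫_C (f^n)^{dz}`, i.e.
`{ wⁿ : w ∈ MInt (f, γ) } ⊆ MInt (fⁿ, γ)` for every integer `n`, where `fⁿ` is the
pointwise `n`-th integer power of `f`. -/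
theorem multiplicative_integral_zpow
    (a b : ℝ) (hab : a < b)
    (γ : ℝ → ℂ) (hγ : PiecewiseC1On γ a b)
    (U : Set ℂ) (hU : IsOpen U) (hγU : ∀ t ∈ Set.Icc a b, γ t ∈ U)
    (f : ℂ → ℂ) (hf : ContinuousOn f U) (hne : ∀ z ∈ U, f z ≠ 0)
    (n : ℤ) :
    {w | ∃ v ∈ MInt f γ a b, w = v ^ n} ⊆ MInt (fun z => f z ^ n) γ a b := by
  rintro _ ⟨v, hv, rfl⟩
  exact multiplicative_integral_zpow_general hv n
end

section
/- Let D ⊆ ℂ be open and connected, let f : ℂ → ℂ be holomorphic and nowhere-vanishing on D, and let γ : [a, b] → D (a < b) be a piecewise continuously differentiable curve. Let f* : D → ℂ be the multiplicative derivative f*(z) = exp(f'(z)/f(z)), which is continuous and nowhere-vanishing. Then the fundamental theorem of calculus for complex multiplicative integrals holds: MInt(f*, γ) = { exp(2π·n·i·(γ(b) − γ(a))) · f(γ(b)) / f(γ(a)) : n ∈ ℤ }. In particular the branch value exp(∫_a^b (f'(γ(t))/f(γ(t)))·γ'(t) dt) equals f(γ(b))/f(γ(a)), so the complex multiplicative integral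 of f* depends only on the endpoints of γ. -/
open Complex

/-!
A continuous logarithm `h` of `f` along `γ` exists because `exp` is a covering of the punctured
plane. Wherever `γ` is differentiable, `h` is an antiderivative of `(f' ∘ γ) / (f ∘ γ) * γ'`, so
the integral of this function is `h b - h a`, and exponentiating gives `f (γ b) / f (γ a)`. This is
one branch value, since `(f' / f) ∘ γ` is a continuous logarithm of `f*` along `γ`.

Every other continuous logarithm of `f*` along `γ` differs from it by a constant in `2πiℤ`, and
adding `2πin` to the logarithm multiplies the branch value by `exp (2πin (γ b - γ a))`.
-/

open Set Filter MeasureTheory Topology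

theorem exists_int_eq_add_of_cexp_eq {X : Type*} [TopologicalSpace X] {s : Set X}
    (hs : IsPreconnected s) {h l : X → ℂ} (hh : ContinuousOn h s) (hl : ContinuousOn l s)
    (hexp : ∀ x ∈ s, exp (h x) = exp (l x)) :
    ∃ n : ℤ, ∀ x ∈ s, h x = l x + n * (2 * Real.pi * I) := by
  obtain rfl | ⟨x₀, hx₀⟩ := s.eq_empty_or_nonempty
  · simp
  obtain ⟨n, hn⟩ := exp_eq_exp_iff_exists_int.1 (hexp x₀ hx₀)
  refine ⟨n, isCoveringMap_exp.eqOn_of_comp_eqOn hs hh (hl.add continuousOn_const)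
    (fun x hx => Subtype.ext ?_) hx₀ hn⟩
  exact (hexp x hx).trans (exp_eq_exp_iff_exists_int.2 ⟨-n, by simp⟩)

theorem hasDerivAt_of_cexp_eventuallyEq {h c : ℝ → ℂ} {c' : ℂ} {t : ℝ} (hh : ContinuousAt h t)
    (hexp : ∀ᶠ s in 𝓝 t, exp (h s) = c s) (hc : HasDerivAt c c' t) :
    HasDerivAt h (c' / c t) t := by
  have hct : c t ≠ 0 := hexp.self_of_nhds ▸ exp_ne_zero (h t)
  have hone : c t / c t = 1 := div_self hct
  have hlog : HasDerivAt (fun s => h t + log (c s / c t)) (c' / c t) t := by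
    simpa only [hone, div_one] using
      ((hc.div_const (c t)).clog_real (hone ▸ one_mem_slitPlane)).const_add (h t)
  have him : Tendsto (fun s => (h s - h t).im) (𝓝 t) (𝓝 0) := by
    have hcont : ContinuousAt (fun s => (h s - h t).im) t := by fun_prop
    simpa only [sub_self, zero_im] using hcont.tendsto
  -- Near `t` the difference `h - h t` stays in the strip where `log` inverts `exp`.
  refine hlog.congr_of_eventuallyEq ?_
  filter_upwards [hexp, him.eventually (Ioo_mem_nhds (neg_lt_zero.2 Real.pi_pos) Real.pi_pos)]
    with s hs hsim
  rw [← hs, ← hexp.self_of_nhds, ← exp_sub, log_exp hsim.1 hsim.2.le, add_sub_cancel]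

theorem exists_isContinuousLog_s17 {g : ℂ → ℂ} {γ : ℝ → ℂ} {a b : ℝ} (hab : a ≤ b)
    (hg : ContinuousOn (g ∘ γ) (Icc a b)) (hne : ∀ t ∈ Icc a b, g (γ t) ≠ 0) :
    ∃ h, IsContinuousLog g γ a b h := by
  let c : C(ℝ, ℂ) := ⟨IccExtend hab ((Icc a b).domRestrict (g ∘ γ)),
    (continuousOn_iff_continuous_domRestrict.1 hg).Icc_extend'⟩
  have hc : ∀ t, c t ≠ 0 := fun t => hne _ (projIcc a b hab t).2
  obtain ⟨h, ⟨-, hexp⟩, -⟩ :=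
    isCoveringMapOn_exp.existsUnique_continuousMap_lifts c (exp_log (hc a)) hc
  exact ⟨h, h.continuous.continuousOn,
    fun t ht => (congrFun hexp t).trans (IccExtend_of_mem hab ((Icc a b).domRestrict (g ∘ γ)) ht)⟩

namespace IsContinuousLog

variable {g : ℂ → ℂ} {γ : ℝ → ℂ} {a b : ℝ} {h : ℝ → ℂ}

theorem add_int_mul_two_pi_I (hh : IsContinuousLog g γ a b h) (n : ℤ) :
    IsContinuousLog g γ a b fun t => h t + n * (2 * Real.pi * I) :=
  ⟨hh.1.add continuousOn_const,
    fun t ht => (exp_eq_exp_iff_exists_int.2 ⟨n, rfl⟩).trans (hh.2 t ht)⟩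

theorem hasDerivAt (hh : IsContinuousLog g γ a b h) {c' : ℂ} {t : ℝ} (ht : t ∈ Ioo a b)
    (hg : HasDerivAt (g ∘ γ) c' t) : HasDerivAt h (c' / g (γ t)) t :=
  have hnhds : Icc a b ∈ 𝓝 t := Icc_mem_nhds ht.1 ht.2
  hasDerivAt_of_cexp_eventuallyEq (c := g ∘ γ) (hh.1.continuousAt hnhds)
    (eventually_of_mem hnhds hh.2) hg

theorem integral_div_eq_sub (hh : IsContinuousLog g γ a b h) (hab : a ≤ b) {c' : ℝ → ℂ}
    {S : Set ℝ} (hS : S.Countable) (hg : ∀ t ∈ Ioo a b \ S, HasDerivAt (g ∘ γ) (c' t) t)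
    (hint : IntervalIntegrable (fun t => c' t / g (γ t)) volume a b) :
    ∫ t in a..b, c' t / g (γ t) = h b - h a :=
  integral_eq_of_hasDerivAt_off_countable_of_le h _ hab hS hh.1
    (fun t ht => hh.hasDerivAt ht.1 (hg t ht)) hint

end IsContinuousLog

theorem exp_integral_div_eq_div {g : ℂ → ℂ} {γ : ℝ → ℂ} {a b : ℝ} (hab : a ≤ b)
    (hcont : ContinuousOn (g ∘ γ) (Icc a b)) (hne : ∀ t ∈ Icc a b, g (γ t) ≠ 0) {c' : ℝ → ℂ}
    {S : Set ℝ} (hS : S.Countable) (hderiv : ∀ t ∈ Ioo a b \ S, HasDerivAt (g ∘ γ) (c' t) t)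
    (hint : IntervalIntegrable (fun t => c' t / g (γ t)) volume a b) :
    exp (∫ t in a..b, c' t / g (γ t)) = g (γ b) / g (γ a) := by
  obtain ⟨h, hh⟩ := exists_isContinuousLog_s17 hab hcont hne
  rw [hh.integral_div_eq_sub hab hS hderiv hint, exp_sub, hh.2 b (right_mem_Icc.2 hab),
    hh.2 a (left_mem_Icc.2 hab)]

section Curve

variable {γ : ℝ → ℂ} {a b : ℝ} {S : Set ℝ}

theorem integral_add_const_mul_deriv {l : ℝ → ℂ} (hab : a ≤ b) (hγ : ContinuousOn γ (Icc a b))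
    (hS : S.Countable) (hdiff : ∀ t ∈ Ioo a b \ S, DifferentiableAt ℝ γ t)
    (hint : IntervalIntegrable (deriv γ) volume a b)
    (hl : IntervalIntegrable (fun t => l t * deriv γ t) volume a b) (c : ℂ) :
    ∫ t in a..b, (l t + c) * deriv γ t = (∫ t in a..b, l t * deriv γ t) + c * (γ b - γ a) := by
  have hFTC : ∫ t in a..b, deriv γ t = γ b - γ a :=
    integral_eq_of_hasDerivAt_off_countable_of_le γ _ hab hS hγ
      (fun t ht => (hdiff t ht).hasDerivAt) hint
  simp only [add_mul]
  rw [intervalIntegral.integral_add hl (hint.const_mul c),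
    intervalIntegral.integral_const_mul, hFTC]

theorem IsContinuousLog.intervalIntegrable_mul_deriv_s17 {g : ℂ → ℂ} {l : ℝ → ℂ}
    (hl : IsContinuousLog g γ a b l) (hab : a ≤ b)
    (hint : IntervalIntegrable (deriv γ) volume a b) :
    IntervalIntegrable (fun t => l t * deriv γ t) volume a b :=
  hint.continuousOn_mul (by simpa only [uIcc_of_le hab] using hl.1)

theorem IsContinuousLog.mInt_eq {g : ℂ → ℂ} {l : ℝ → ℂ} (hl : IsContinuousLog g γ a b l)
    (hab : a ≤ b) (hγ : ContinuousOn γ (Icc a b)) (hS : S.Countable)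
    (hdiff : ∀ t ∈ Ioo a b \ S, DifferentiableAt ℝ γ t)
    (hint : IntervalIntegrable (deriv γ) volume a b) :
    MInt g γ a b = {w | ∃ n : ℤ,
      w = exp (2 * Real.pi * n * I * (γ b - γ a)) * exp (∫ t in a..b, l t * deriv γ t)} := by
  have hshift (n : ℤ) : exp (∫ t in a..b, (l t + n * (2 * Real.pi * I)) * deriv γ t) =
      exp (2 * Real.pi * n * I * (γ b - γ a)) * exp (∫ t in a..b, l t * deriv γ t) := by
    rw [integral_add_const_mul_deriv hab hγ hS hdiff hint
      (hl.intervalIntegrable_mul_deriv_s17 hab hint), ← exp_add]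
    ring_nf
  ext w
  constructor
  · rintro ⟨h, hh, rfl⟩
    obtain ⟨n, hn⟩ := exists_int_eq_add_of_cexp_eq isPreconnected_Icc hh.1 hl.1
      fun t ht => (hh.2 t ht).trans (hl.2 t ht).symm
    refine ⟨n, (congrArg exp (intervalIntegral.integral_congr fun t ht => ?_)).trans (hshift n)⟩
    rw [uIcc_of_le hab] at ht
    simp only [hn t ht]
  · rintro ⟨n, rfl⟩
    exact ⟨_, hl.add_int_mul_two_pi_I n, (hshift n).symm⟩

theorem exp_integral_deriv_div_mul_deriv {D : Set ℂ} (hD : IsOpen D) {f : ℂ → ℂ}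
    (hf : DifferentiableOn ℂ f D) (hne : ∀ z ∈ D, f z ≠ 0) (hab : a ≤ b)
    (hγ : ContinuousOn γ (Icc a b)) (hS : S.Countable)
    (hdiff : ∀ t ∈ Ioo a b \ S, DifferentiableAt ℝ γ t)
    (hγD : ∀ t ∈ Icc a b, γ t ∈ D)
    (hint : IntervalIntegrable (fun t => deriv f (γ t) / f (γ t) * deriv γ t) volume a b) :
    exp (∫ t in a..b, deriv f (γ t) / f (γ t) * deriv γ t) = f (γ b) / f (γ a) := by
  have hderiv : ∀ t ∈ Ioo a b \ S, HasDerivAt (f ∘ γ) (deriv f (γ t) * deriv γ t) t :=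
    fun t ht =>
      have hγt : D ∈ 𝓝 (γ t) := hD.mem_nhds (hγD t (Ioo_subset_Icc_self ht.1))
      (hf.differentiableAt hγt).hasDerivAt.comp t (hdiff t ht).hasDerivAt
  simp only [← mul_div_right_comm] at hint ⊢
  exact exp_integral_div_eq_div hab (hf.continuousOn.comp hγ hγD) (fun t ht => hne _ (hγD t ht))
    hS hderiv hint

end Curve

namespace PiecewiseC1On

variable {γ : ℝ → ℂ} {a b : ℝ}

theorem exists_countable_differentiableAt (hγ : PiecewiseC1On γ a b) :
    ∃ S : Set ℝ, S.Countable ∧ ∀ t ∈ Ioo a b \ S, DifferentiableAt ℝ γ t := by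
  obtain ⟨-, m, p, -, rfl, rfl, -, hC1⟩ := hγ
  refine ⟨range p, countable_range p, fun t ⟨ht, htp⟩ => ?_⟩
  obtain ⟨k, hk, htk⟩ : ∃ k < m, t ∈ Ioc (p k) (p (k + 1)) := by
    simpa only [mem_iUnion, Finset.mem_range, exists_prop] using
      Ioc_subset_biUnion_Ioc m p (Ioo_subset_Ioc_self ht)
  have ht_lt : t < p (k + 1) := htk.2.lt_of_ne fun h => htp ⟨k + 1, h.symm⟩
  exact ((hC1 k hk).contDiffAt (Icc_mem_nhds htk.1 ht_lt)).differentiableAt one_ne_zero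

theorem intervalIntegrable_deriv_s17 (hγ : PiecewiseC1On γ a b) :
    IntervalIntegrable (deriv γ) volume a b := by
  obtain ⟨-, m, p, -, rfl, rfl, hlt, hC1⟩ := hγ
  refine IntervalIntegrable.trans_iterate fun k hk => ?_
  have hcont : ContinuousOn (derivWithin γ (Icc (p k) (p (k + 1)))) (Icc (p k) (p (k + 1))) :=
    (hC1 k hk).continuousOn_derivWithin (uniqueDiffOn_Icc (hlt k hk)) le_rfl
  refine (hcont.intervalIntegrable_of_Icc (hlt k hk).le).congr_uIoo fun t ht => ?_
  rw [uIoo_of_le (hlt k hk).le] at ht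
  exact derivWithin_of_mem_nhds (Icc_mem_nhds ht.1 ht.2)

end PiecewiseC1On

theorem fundamental_theorem_complex_multiplicative_integral_general
    {D : Set ℂ} (hD : IsOpen D) {f : ℂ → ℂ} (hf : DifferentiableOn ℂ f D)
    (hne : ∀ z ∈ D, f z ≠ 0) {a b : ℝ} (hab : a ≤ b) {γ : ℝ → ℂ}
    (hγ : ContinuousOn γ (Icc a b)) {S : Set ℝ} (hS : S.Countable)
    (hdiff : ∀ t ∈ Ioo a b \ S, DifferentiableAt ℝ γ t)
    (hint : IntervalIntegrable (deriv γ) volume a b) (hγD : ∀ t ∈ Icc a b, γ t ∈ D) :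
    ContinuousOn (fun z => exp (deriv f z / f z)) D ∧
    (∀ z ∈ D, exp (deriv f z / f z) ≠ 0) ∧
    MInt (fun z => exp (deriv f z / f z)) γ a b =
      {w | ∃ n : ℤ, w = exp (2 * Real.pi * n * I * (γ b - γ a)) * f (γ b) / f (γ a)} ∧
    exp (∫ t in a..b, deriv f (γ t) / f (γ t) * deriv γ t) = f (γ b) / f (γ a) := by
  have hquot : ContinuousOn (fun z => deriv f z / f z) D :=
    (hf.deriv hD).continuousOn.div hf.continuousOn hne
  have hlog : IsContinuousLog (fun z => exp (deriv f z / f z)) γ a b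
      fun t => deriv f (γ t) / f (γ t) :=
    ⟨hquot.comp hγ hγD, fun _ _ => rfl⟩
  have hvalue := exp_integral_deriv_div_mul_deriv hD hf hne hab hγ hS hdiff hγD
    (hlog.intervalIntegrable_mul_deriv_s17 hab hint)
  refine ⟨hquot.cexp, fun z _ => exp_ne_zero _, ?_, hvalue⟩
  simp only [hlog.mInt_eq hab hγ hS hdiff hint, hvalue, mul_div_assoc]

/-- Theorem 10 (fundamental theorem of calculus for complex multiplicative integrals): for
`f` holomorphic and nowhere-vanishing on the open connected set `D`, the multiplicative
derivative `f*(z) = exp (f'(z)/f(z))` is continuous and nowhere-vanishing, and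
`MInt (f*, γ) = { exp (2π·n·i·(γ b − γ a)) · f (γ b) / f (γ a) : n ∈ ℤ }`; in particular
the branch value `exp (∫_a^b (f'(γ t)/f(γ t))·γ'(t) dt)` equals `f (γ b)/f (γ a)`, so the
complex multiplicative integral of `f*` depends only on the endpoints of `γ`. -/
theorem fundamental_theorem_complex_multiplicative_integral
    (D : Set ℂ) (hD : IsOpen D) (hDconn : IsConnected D)
    (f : ℂ → ℂ) (hf : DifferentiableOn ℂ f D) (hne : ∀ z ∈ D, f z ≠ 0)
    (a b : ℝ) (hab : a < b)
    (γ : ℝ → ℂ) (hγ : PiecewiseC1On γ a b) (hγD : ∀ t ∈ Set.Icc a b, γ t ∈ D) :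
    ContinuousOn (fun z => Complex.exp (deriv f z / f z)) D ∧
    (∀ z ∈ D, Complex.exp (deriv f z / f z) ≠ 0) ∧
    MInt (fun z => Complex.exp (deriv f z / f z)) γ a b =
      {w | ∃ n : ℤ,
        w = Complex.exp (2 * Real.pi * (n : ℂ) * I * (γ b - γ a)) * f (γ b) / f (γ a)} ∧
    Complex.exp (∫ t in a..b, (deriv f (γ t) / f (γ t)) * deriv γ t) =
      f (γ b) / f (γ a) := by
  obtain ⟨S, hS, hdiff⟩ := hγ.exists_countable_differentiableAt
  exact fundamental_theorem_complex_multiplicative_integral_general hD hf hne hab.le hγ.1 hS hdiff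
    hγ.intervalIntegrable_deriv_s17 hγD
end
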